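/- Let R be a unital complex *-algebra and let A and B be unital *-subalgebras of R such that every element of A commutes with every element of B. Let ω be a state on R which is a product state relative to A and B. Then for every N ∈ ℕ and all families x : Fin N → A and y : Fin N → B, the double sum ∑_{j,k} ω((x k) * star (x j) * star (y j) * (y k)) is a nonnegative real number. -/

import Mathlib

open scoped ComplexOrder

/-- A state on a unital complex `*`-algebra: a `ℂ`-linear functional sending `1` to `1`
and `star a * a` to a nonnegative real number (using the partial order on `ℂ`,
where `0 ≤ z` means `z` is real and nonnegative). -/
def IsState {A : Type*} [Ring A] [StarRing A] [Algebra ℂ A]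
    (ω : A →ₗ[ℂ] ℂ) : Prop :=
  ω 1 = 1 ∧ ∀ a : A, 0 ≤ ω (star a * a)

/-!
The product property factors each term of the double sum as
`ω (x k * star (x j)) * ω (star (y j) * y k)`, so the sum is the trace of `P * Q`, where `P` and `Q`
are the Gram matrices of the families `y` and `star x` for the form `(a, b) ↦ ω (star a * b)`.
Both are positive semidefinite, Hermitian symmetry being automatic over `ℂ` by polarization, and
decomposing `Q` into terms `v * vᴴ` exhibits the trace as a sum of nonnegative terms `vᴴ * P * v`.
-/

section SesquilinearForm

variable {M : Type*} [AddCommMonoid M]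

theorem isSymm_of_isNonneg_complex [Module ℂ M] {B : M →ₗ⋆[ℂ] M →ₗ[ℂ] ℂ} (hB : B.IsNonneg) :
    B.IsSymm where
  eq a b := by
    have im_self (c : M) : (B c c).im = 0 := (Complex.nonneg_iff.mp (hB.nonneg c)).2.symm
    have im_eq : (B a b).im + (B b a).im = 0 := by
      simpa [im_self a, im_self b, add_comm] using im_self (a + b)
    have re_eq : (B a b).re - (B b a).re = 0 := by
      simpa [im_self a, im_self b, sub_eq_add_neg, add_comm] using im_self (a + Complex.I • b)
    apply Complex.ext
    · simpa using sub_eq_zero.mp re_eq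
    · simpa using neg_eq_of_add_eq_zero_right im_eq

theorem posSemidef_gram_of_isPosSemidef {R ι : Type*} [CommRing R] [PartialOrder R] [StarRing R]
    [Module R M] {B : M →ₗ⋆[R] M →ₗ[R] R} (hB : B.IsPosSemidef) (v : ι → M) :
    (Matrix.of fun i j ↦ B (v i) (v j)).PosSemidef := by
  refine ⟨Matrix.IsHermitian.ext fun i j ↦ hB.eq (v j) (v i), fun c ↦ ?_⟩
  convert hB.nonneg (c.sum fun i r ↦ r • v i) using 1
  simp only [Finsupp.sum, Matrix.of_apply, map_sum, LinearMap.sum_apply, LinearMap.map_smulₛₗ,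
    LinearMap.smul_apply, map_smul, smul_eq_mul, starRingEnd_apply, Finset.mul_sum]
  rw [Finset.sum_comm]
  exact Finset.sum_congr rfl fun j _ ↦ Finset.sum_congr rfl fun i _ ↦ by ring

end SesquilinearForm

theorem trace_mul_nonneg_of_posSemidef {𝕜 n : Type*} [RCLike 𝕜] [Fintype n] {P Q : Matrix n n 𝕜}
    (hP : P.PosSemidef) (hQ : Q.PosSemidef) : 0 ≤ (P * Q).trace := by
  obtain ⟨m, v, rfl⟩ := Matrix.posSemidef_iff_eq_sum_vecMulVec.mp hQ
  simp only [Finset.mul_sum, Matrix.mul_vecMulVec, Matrix.trace_sum, Matrix.trace_vecMulVec]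
  refine Finset.sum_nonneg fun i _ ↦ ?_
  rw [dotProduct_comm]
  exact hP.dotProduct_mulVec_nonneg (v i)

section GNS

variable {A B : Type*}
  [NonUnitalRing A] [StarRing A] [Module ℂ A] [StarModule ℂ A]
  [IsScalarTower ℂ A A] [SMulCommClass ℂ A A]
  [NonUnitalRing B] [StarRing B] [Module ℂ B] [StarModule ℂ B]
  [IsScalarTower ℂ B B] [SMulCommClass ℂ B B]

/-- The sesquilinear form `(a, b) ↦ φ (star a * b)` of the Gelfand-Naimark-Segal construction,
conjugate-linear in the first variable. -/
def gnsForm (φ : A →ₗ[ℂ] ℂ) : A →ₗ⋆[ℂ] A →ₗ[ℂ] ℂ :=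
  LinearMap.mk₂'ₛₗ (starRingEnd ℂ) (RingHom.id ℂ) (fun a b ↦ φ (star a * b))
    (by simp [add_mul]) (by simp [smul_mul_assoc]) (by simp [mul_add]) (by simp [mul_smul_comm])

theorem posSemidef_gram_star_mul {ι : Type*} {φ : A →ₗ[ℂ] ℂ} (hφ : ∀ a, 0 ≤ φ (star a * a))
    (v : ι → A) : (Matrix.of fun i j ↦ φ (star (v i) * v j)).PosSemidef :=
  have nonneg : (gnsForm φ).IsNonneg := ⟨hφ⟩
  posSemidef_gram_of_isPosSemidef ⟨isSymm_of_isNonneg_complex nonneg, nonneg⟩ v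

theorem sum_mul_star_mul_star_mul_nonneg {ι : Type*} [Fintype ι]
    {φ : A →ₗ[ℂ] ℂ} (hφ : ∀ a, 0 ≤ φ (star a * a))
    {ψ : B →ₗ[ℂ] ℂ} (hψ : ∀ b, 0 ≤ ψ (star b * b)) (x : ι → A) (y : ι → B) :
    0 ≤ ∑ j, ∑ k, φ (x k * star (x j)) * ψ (star (y j) * y k) := by
  simpa [Matrix.trace, Matrix.mul_apply, mul_comm] using
    trace_mul_nonneg_of_posSemidef (posSemidef_gram_star_mul hψ y)
      (posSemidef_gram_star_mul hφ fun i ↦ star (x i))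

end GNS

theorem product_state_verch_werner_ppt_general {R S T ι : Type*}
    [NonUnitalRing R] [StarRing R] [Module ℂ R] [StarModule ℂ R]
    [IsScalarTower ℂ R R] [SMulCommClass ℂ R R]
    [SetLike S R] [MulMemClass S R] [StarMemClass S R]
    [SetLike T R] [MulMemClass T R] [StarMemClass T R] [Fintype ι]
    (A : S) (B : T) (ω : R →ₗ[ℂ] ℂ) (hω : ∀ a, 0 ≤ ω (star a * a))
    (hprod : ∀ a ∈ A, ∀ b ∈ B, ω (a * b) = ω a * ω b) (x : ι → A) (y : ι → B) :
    0 ≤ ∑ j, ∑ k, ω ((x k : R) * star (x j : R) * star (y j : R) * (y k : R)) := by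
  have factor (j k : ι) : ω ((x k : R) * star (x j : R) * star (y j : R) * (y k : R)) =
      ω ((x k : R) * star (x j : R)) * ω (star (y j : R) * (y k : R)) := by
    rw [mul_assoc (_ * _)]
    exact hprod _ (mul_mem (x k).2 (star_mem (x j).2)) _ (mul_mem (star_mem (y j).2) (y k).2)
  simp only [factor]
  exact sum_mul_star_mul_star_mul_nonneg hω hω (fun i ↦ (x i : R)) (fun i ↦ (y i : R))

/-- Every product state (relative to two commuting unital `*`-subalgebras `A`, `B` of `R`)
has the Verch-Werner ppt property. -/
theorem product_state_verch_werner_ppt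
    {R : Type*} [Ring R] [StarRing R] [Algebra ℂ R] [StarModule ℂ R]
    (A B : StarSubalgebra ℂ R)
    (hcomm : ∀ a ∈ A, ∀ b ∈ B, a * b = b * a)
    (ω : R →ₗ[ℂ] ℂ) (hω : IsState ω)
    (hprod : ∀ a ∈ A, ∀ b ∈ B, ω (a * b) = ω a * ω b)
    (N : ℕ) (x : Fin N → A) (y : Fin N → B) :
    0 ≤ ∑ j : Fin N, ∑ k : Fin N,
      ω ((x k : R) * star (x j : R) * star (y j : R) * (y k : R)) :=
  product_state_verch_werner_ppt_general A B ω hω.2 hprod x y
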